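/- Let 0 < σ̲ ≤ σ̄ and let S ∈ ℝ^{d×d} be a symmetric matrix, partitioned into blocks, satisfying σ̲ I_d ⪯ S ⪯ σ̄ I_d. Then the gradient matrix D(G⋆) with G⋆ = S_xy S_yy^{-1} satisfies ‖D(G⋆)‖ = 1 + ‖S_yy^{-1} S_yx S_xy S_yy^{-1}‖ ≤ σ̄²/σ̲², where ‖·‖ denotes the spectral norm. -/

import Mathlib

open Matrix

/-- The objective `f(S) = Tr(S_xx − S_xy S_yy⁻¹ S_yx)` of the convex reformulation. -/
noncomputable def fobj {n m : ℕ} (S : Matrix (Fin n ⊕ Fin m) (Fin n ⊕ Fin m) ℝ) : ℝ :=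
  (S.toBlocks₁₁ - S.toBlocks₁₂ * S.toBlocks₂₂⁻¹ * S.toBlocks₂₁).trace

/-- The gradient matrix `D(G) = [I, −G]ᵀ[I, −G] = [[I, −G], [−Gᵀ, GᵀG]]`. -/
def Dmat {n m : ℕ} (G : Matrix (Fin n) (Fin m) ℝ) :
    Matrix (Fin n ⊕ Fin m) (Fin n ⊕ Fin m) ℝ :=
  Matrix.fromBlocks 1 (-G) (-Gᵀ) (Gᵀ * G)


/-- The spectral norm of a real square matrix, i.e. the operator norm of the induced
linear map on Euclidean space. -/
noncomputable def specNorm {ι : Type*} [Fintype ι] [DecidableEq ι] (A : Matrix ι ι ℝ) : ℝ :=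
  ‖Matrix.toEuclideanCLM (𝕜 := ℝ) A‖

/-!
Since `D(G) = [I, −G]ᴴ [I, −G]`, its norm is `‖[I, −G]‖² = ‖I + G Gᴴ‖ = 1 + ‖G‖²`. For `G⋆` the
upper bound comes from the identity `S [0; S_yy⁻¹] = [G⋆; I]`: the right-hand side has squared norm
`1 + ‖G⋆‖²` and the left-hand side has norm at most `‖S‖ ‖S_yy⁻¹‖ ≤ σ̄ / σ̲`.
-/

theorem mul_fromRows_zero_inv_toBlocks₂₂ {R n m : Type*} [CommRing R] [Fintype n] [Fintype m]
    [DecidableEq m] {S : Matrix (n ⊕ m) (n ⊕ m) R} (hS : IsUnit S.toBlocks₂₂) :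
    S * fromRows (0 : Matrix n m R) S.toBlocks₂₂⁻¹ =
      fromRows (S.toBlocks₁₂ * S.toBlocks₂₂⁻¹) 1 := by
  conv_lhs => enter [1]; rw [← fromBlocks_toBlocks S]
  rw [fromBlocks_mul_fromRows, mul_nonsing_inv _ ((isUnit_iff_isUnit_det _).1 hS)]
  simp only [Matrix.mul_zero, zero_add]

theorem norm_le_iff_reApplyInnerSelf_le {𝕜 E : Type*} [RCLike 𝕜] [NormedAddCommGroup E]
    [InnerProductSpace 𝕜 E] [Nontrivial E] {T : E →L[𝕜] E} (hT : T.IsPositive) {c : ℝ} :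
    ‖T‖ ≤ c ↔ ∀ x, T.reApplyInnerSelf x ≤ c * ‖x‖ ^ 2 := by
  constructor
  · intro hc x
    calc T.reApplyInnerSelf x ≤ ‖T x‖ * ‖x‖ := re_inner_le_norm _ _
      _ ≤ c * ‖x‖ * ‖x‖ := by gcongr; exact T.le_of_opNorm_le hc x
      _ = c * ‖x‖ ^ 2 := by ring
  · intro hle
    have hc : 0 ≤ c := by
      obtain ⟨x, hx⟩ := exists_ne (0 : E)
      exact nonneg_of_mul_nonneg_left ((hT.2 x).trans (hle x)) (by positivity)
    rw [T.norm_eq_iSup_rayleighQuotient hT.isSymmetric]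
    refine ciSup_le fun x => ?_
    rw [ContinuousLinearMap.rayleighQuotient, abs_of_nonneg (div_nonneg (hT.2 x) (by positivity))]
    exact div_le_of_le_mul₀ (by positivity) hc (hle x)

section Matrix

open scoped Matrix.Norms.L2Operator ComplexOrder

variable {𝕜 n m p : Type*} [RCLike 𝕜]

theorem posDef_of_posSemidef_sub_smul_one [DecidableEq n] {A : Matrix n n 𝕜} {c : ℝ}
    (hc : 0 < c) (h : (A - c • (1 : Matrix n n 𝕜)).PosSemidef) : A.PosDef := by
  simpa using PosDef.posSemidef_add h (PosDef.one.smul hc)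

section Square

variable [Fintype n] [DecidableEq n]

theorem isPositive_toEuclideanCLM_iff {A : Matrix n n 𝕜} :
    (toEuclideanCLM (𝕜 := 𝕜) A).IsPositive ↔ A.PosSemidef := by
  rw [← ContinuousLinearMap.isPositive_toLinearMap_iff, coe_toEuclideanCLM_eq_toEuclideanLin,
    isPositive_toEuclideanLin_iff]

theorem reApplyInnerSelf_toEuclideanCLM_smul_one_sub (c : ℝ) (A : Matrix n n 𝕜)
    (x : EuclideanSpace 𝕜 n) :
    (toEuclideanCLM (𝕜 := 𝕜) (c • 1 - A)).reApplyInnerSelf x =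
      c * ‖x‖ ^ 2 - (toEuclideanCLM (𝕜 := 𝕜) A).reApplyInnerSelf x := by
  have hc : c • (1 : Matrix n n 𝕜) = (c : 𝕜) • 1 := RCLike.real_smul_eq_coe_smul c 1
  simp only [ContinuousLinearMap.reApplyInnerSelf_apply, hc, map_sub, map_smul, map_one,
    _root_.sub_apply, _root_.smul_apply, one_apply_eq_self, inner_sub_left, inner_smul_left,
    RCLike.conj_ofReal, RCLike.re_ofReal_mul, inner_self_eq_norm_sq]

theorem posSemidef_smul_one_sub_iff {A : Matrix n n 𝕜} (hA : A.IsHermitian) {c : ℝ} :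
    (c • (1 : Matrix n n 𝕜) - A).PosSemidef ↔
      ∀ x, (toEuclideanCLM (𝕜 := 𝕜) A).reApplyInnerSelf x ≤ c * ‖x‖ ^ 2 := by
  have hsymm : ((toEuclideanCLM (𝕜 := 𝕜) (c • 1 - A)).toLinearMap).IsSymmetric := by
    rw [coe_toEuclideanCLM_eq_toEuclideanLin, isSymmetric_toEuclideanLin_iff]
    exact (isHermitian_one.smul (.all c)).sub hA
  simp only [← isPositive_toEuclideanCLM_iff, ContinuousLinearMap.isPositive_def,
    and_iff_right hsymm, reApplyInnerSelf_toEuclideanCLM_smul_one_sub, sub_nonneg]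

theorem l2_opNorm_le_iff_posSemidef [Nonempty n] {A : Matrix n n 𝕜} (hA : A.PosSemidef) {c : ℝ} :
    ‖A‖ ≤ c ↔ (c • (1 : Matrix n n 𝕜) - A).PosSemidef := by
  rw [posSemidef_smul_one_sub_iff hA.isHermitian, ← l2_opNorm_toEuclideanCLM,
    norm_le_iff_reApplyInnerSelf_le (isPositive_toEuclideanCLM_iff.2 hA)]

theorem l2_opNorm_one_add_of_posSemidef [Nonempty n] {A : Matrix n n 𝕜} (hA : A.PosSemidef) :
    ‖1 + A‖ = 1 + ‖A‖ := by
  apply le_antisymm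
  · simpa using norm_add_le (1 : Matrix n n 𝕜) A
  · have hbound : (‖1 + A‖ • (1 : Matrix n n 𝕜) - (1 + A)).PosSemidef :=
      (l2_opNorm_le_iff_posSemidef (PosSemidef.one.add hA)).1 le_rfl
    have hA_le : ‖A‖ ≤ ‖1 + A‖ - 1 := (l2_opNorm_le_iff_posSemidef hA).2 <| by
      rwa [sub_smul, one_smul, sub_sub]
    linarith

theorem posSemidef_inv_smul_one_sub_inv {A : Matrix n n 𝕜} {c : ℝ} (hc : 0 < c)
    (h : (A - c • (1 : Matrix n n 𝕜)).PosSemidef) :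
    (c⁻¹ • (1 : Matrix n n 𝕜) - A⁻¹).PosSemidef := by
  have hA := posDef_of_posSemidef_sub_smul_one hc h
  have hdet : IsUnit A.det := (isUnit_iff_isUnit_det A).1 hA.isUnit
  -- With `R = A - c`, `c⁻¹ - A⁻¹ = c⁻¹ A⁻¹ R` is the congruence by `A⁻¹` of
  -- `c⁻¹ R A = R + c⁻¹ R²`.
  set R := A - c • (1 : Matrix n n 𝕜) with hR
  have hAR : A * (c⁻¹ • 1 - A⁻¹) * A = R + c⁻¹ • (Rᴴ * R) := by
    rw [h.isHermitian.eq, hR]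
    simp [mul_sub, sub_mul, smul_sub, hc.ne', mul_nonsing_inv A hdet]
  have hcongr : c⁻¹ • (1 : Matrix n n 𝕜) - A⁻¹ = A⁻¹ᴴ * (R + c⁻¹ • (Rᴴ * R)) * A⁻¹ := by
    rw [← hAR, hA.inv.isHermitian.eq]
    simp only [Matrix.mul_assoc, mul_nonsing_inv A hdet, Matrix.mul_one,
      nonsing_inv_mul_cancel_left _ _ hdet]
  rw [hcongr]
  exact (h.add ((posSemidef_conjTranspose_mul_self R).smul
    (inv_nonneg.2 hc.le))).conjTranspose_mul_mul_same _

theorem l2_opNorm_inv_le [Nonempty n] {A : Matrix n n 𝕜} {c : ℝ} (hc : 0 < c)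
    (h : (A - c • (1 : Matrix n n 𝕜)).PosSemidef) : ‖A⁻¹‖ ≤ c⁻¹ :=
  (l2_opNorm_le_iff_posSemidef (posDef_of_posSemidef_sub_smul_one hc h).inv.posSemidef).2
    (posSemidef_inv_smul_one_sub_inv hc h)

end Square

section Rectangular

variable [Fintype n] [Fintype m] [DecidableEq m]

theorem l2_opNorm_one_add_conjTranspose_mul_self [Nonempty m] (A : Matrix n m 𝕜) :
    ‖1 + Aᴴ * A‖ = 1 + ‖A‖ ^ 2 := by
  rw [l2_opNorm_one_add_of_posSemidef (posSemidef_conjTranspose_mul_self A),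
    l2_opNorm_conjTranspose_mul_self, sq]

theorem l2_opNorm_fromRows_sq [Fintype p] (A : Matrix n m 𝕜) (B : Matrix p m 𝕜) :
    ‖fromRows A B‖ ^ 2 = ‖Aᴴ * A + Bᴴ * B‖ := by
  rw [sq, ← l2_opNorm_conjTranspose_mul_self, conjTranspose_fromRows_eq_fromCols_conjTranspose,
    fromCols_mul_fromRows]

end Rectangular

/-- The gradient matrix `D(G) = [I, −G]ᴴ [I, −G]` over `ℝ` or `ℂ` and for arbitrary index types,
kept in factored form because its norm is then the square of the norm of `[I, −G]ᴴ`. -/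
def gradientMatrix [Fintype n] [DecidableEq n] (G : Matrix n m 𝕜) : Matrix (n ⊕ m) (n ⊕ m) 𝕜 :=
  (fromCols 1 (-G))ᴴ * fromCols 1 (-G)

theorem gradientMatrix_eq_fromBlocks [Fintype n] [DecidableEq n] (G : Matrix n m 𝕜) :
    gradientMatrix G = fromBlocks 1 (-G) (-Gᴴ) (Gᴴ * G) := by
  rw [gradientMatrix, conjTranspose_fromCols_eq_fromRows_conjTranspose, fromRows_mul_fromCols]
  simp

section Blocks

variable [Fintype n] [DecidableEq n] [Fintype m] [DecidableEq m]

theorem l2_opNorm_gradientMatrix [Nonempty n] (G : Matrix n m 𝕜) :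
    ‖gradientMatrix G‖ = 1 + ‖G‖ ^ 2 := by
  calc ‖gradientMatrix G‖ = ‖(fromCols (1 : Matrix n n 𝕜) (-G))ᴴ‖ ^ 2 := by
        rw [gradientMatrix, l2_opNorm_conjTranspose_mul_self, l2_opNorm_conjTranspose, sq]
    _ = ‖1 + Gᴴᴴ * Gᴴ‖ := by
        rw [conjTranspose_fromCols_eq_fromRows_conjTranspose, l2_opNorm_fromRows_sq]
        simp
    _ = 1 + ‖G‖ ^ 2 := by
        rw [l2_opNorm_one_add_conjTranspose_mul_self, l2_opNorm_conjTranspose]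

theorem one_add_l2_opNorm_toBlocks₁₂_mul_inv_sq_le [Nonempty m] {S : Matrix (n ⊕ m) (n ⊕ m) 𝕜}
    (hS : IsUnit S.toBlocks₂₂) :
    1 + ‖S.toBlocks₁₂ * S.toBlocks₂₂⁻¹‖ ^ 2 ≤ (‖S‖ * ‖S.toBlocks₂₂⁻¹‖) ^ 2 := by
  calc 1 + ‖S.toBlocks₁₂ * S.toBlocks₂₂⁻¹‖ ^ 2
      = ‖fromRows (S.toBlocks₁₂ * S.toBlocks₂₂⁻¹) (1 : Matrix m m 𝕜)‖ ^ 2 := by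
        rw [l2_opNorm_fromRows_sq, conjTranspose_one, one_mul, add_comm (_ᴴ * _),
          l2_opNorm_one_add_conjTranspose_mul_self]
    _ ≤ (‖S‖ * ‖fromRows (0 : Matrix n m 𝕜) S.toBlocks₂₂⁻¹‖) ^ 2 := by
        rw [← mul_fromRows_zero_inv_toBlocks₂₂ hS]
        gcongr
        exact l2_opNorm_mul _ _
    _ = (‖S‖ * ‖S.toBlocks₂₂⁻¹‖) ^ 2 := by
        rw [mul_pow, mul_pow, l2_opNorm_fromRows_sq, conjTranspose_zero, Matrix.zero_mul, zero_add,
          l2_opNorm_conjTranspose_mul_self, ← sq]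

theorem stmt15_general [Nonempty n] [Nonempty m] {σl σu : ℝ} (hσl : 0 < σl)
    {S : Matrix (n ⊕ m) (n ⊕ m) 𝕜}
    (hlo : (S - σl • (1 : Matrix (n ⊕ m) (n ⊕ m) 𝕜)).PosSemidef)
    (hhi : (σu • (1 : Matrix (n ⊕ m) (n ⊕ m) 𝕜) - S).PosSemidef) :
    ‖gradientMatrix (S.toBlocks₁₂ * S.toBlocks₂₂⁻¹)‖ =
        1 + ‖S.toBlocks₂₂⁻¹ * S.toBlocks₂₁ * S.toBlocks₁₂ * S.toBlocks₂₂⁻¹‖ ∧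
      ‖gradientMatrix (S.toBlocks₁₂ * S.toBlocks₂₂⁻¹)‖ ≤ σu ^ 2 / σl ^ 2 := by
  set G := S.toBlocks₁₂ * S.toBlocks₂₂⁻¹ with hG
  have hS : S.PosDef := posDef_of_posSemidef_sub_smul_one hσl hlo
  have hlo₂₂ : (S.toBlocks₂₂ - σl • (1 : Matrix m m 𝕜)).PosSemidef := by
    convert hlo.submatrix (Sum.inr : m → n ⊕ m) using 1
    ext i j
    simp [toBlocks₂₂, one_apply]
  have hS₂₂ := posDef_of_posSemidef_sub_smul_one hσl hlo₂₂
  have hGram : S.toBlocks₂₂⁻¹ * S.toBlocks₂₁ * S.toBlocks₁₂ * S.toBlocks₂₂⁻¹ = Gᴴ * G := by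
    have h₂₁ : S.toBlocks₁₂ᴴ = S.toBlocks₂₁ := by
      ext i j; exact hS.isHermitian.apply _ _
    rw [hG, conjTranspose_mul, hS₂₂.inv.isHermitian.eq, h₂₁]
    simp only [Matrix.mul_assoc]
  refine ⟨by rw [l2_opNorm_gradientMatrix, hGram, l2_opNorm_conjTranspose_mul_self, sq], ?_⟩
  calc ‖gradientMatrix G‖ = 1 + ‖G‖ ^ 2 := l2_opNorm_gradientMatrix G
    _ ≤ (‖S‖ * ‖S.toBlocks₂₂⁻¹‖) ^ 2 := one_add_l2_opNorm_toBlocks₁₂_mul_inv_sq_le hS₂₂.isUnit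
    _ ≤ (σu * σl⁻¹) ^ 2 := by
        gcongr
        · exact (norm_nonneg S).trans ((l2_opNorm_le_iff_posSemidef hS.posSemidef).2 hhi)
        · exact (l2_opNorm_le_iff_posSemidef hS.posSemidef).2 hhi
        · exact l2_opNorm_inv_le hσl hlo₂₂
    _ = σu ^ 2 / σl ^ 2 := by rw [← div_eq_mul_inv, div_pow]

end Blocks

end Matrix

theorem Dmat_eq_gradientMatrix {n m : ℕ} (G : Matrix (Fin n) (Fin m) ℝ) :
    Dmat G = gradientMatrix G := by
  simp only [Dmat, gradientMatrix_eq_fromBlocks, conjTranspose_eq_transpose_of_trivial]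

open scoped Matrix.Norms.L2Operator in
theorem specNorm_eq_l2_opNorm {ι : Type*} [Fintype ι] [DecidableEq ι] (A : Matrix ι ι ℝ) :
    specNorm A = ‖A‖ :=
  l2_opNorm_toEuclideanCLM A

/-- If `σ̲ I ⪯ S ⪯ σ̄ I` with `0 < σ̲ ≤ σ̄`, then the gradient matrix `D(G⋆)` with
`G⋆ = S_xy S_yy⁻¹` satisfies `‖D(G⋆)‖ = 1 + ‖S_yy⁻¹ S_yx S_xy S_yy⁻¹‖ ≤ σ̄²/σ̲²`. -/
theorem stmt15 {n m : ℕ} [NeZero n] [NeZero m] (σl σu : ℝ) (hσl : 0 < σl) (hσ : σl ≤ σu)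
    (S : Matrix (Fin n ⊕ Fin m) (Fin n ⊕ Fin m) ℝ) (hsym : S.IsSymm)
    (hlo : (S - σl • (1 : Matrix (Fin n ⊕ Fin m) (Fin n ⊕ Fin m) ℝ)).PosSemidef)
    (hhi : (σu • (1 : Matrix (Fin n ⊕ Fin m) (Fin n ⊕ Fin m) ℝ) - S).PosSemidef) :
    specNorm (Dmat (S.toBlocks₁₂ * S.toBlocks₂₂⁻¹)) =
        1 + specNorm (S.toBlocks₂₂⁻¹ * S.toBlocks₂₁ * S.toBlocks₁₂ * S.toBlocks₂₂⁻¹) ∧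
      specNorm (Dmat (S.toBlocks₁₂ * S.toBlocks₂₂⁻¹)) ≤ σu ^ 2 / σl ^ 2 := by
  simpa only [Dmat_eq_gradientMatrix, specNorm_eq_l2_opNorm] using stmt15_general hσl hlo hhi
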